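/- arXiv:2603.02863 — 2 statements merged into one kernel-verified Lean document; each statement's English description precedes it below -/
import Mathlib

section
/- Let step : ℕ → ℕ → Prop be the relation defined by step x y ↔ (y = x + 1) ∨ (6 ≤ x ∧ y = x - 5). Then for all natural numbers n and m with n ≥ 1 and m ≥ 1, m is reachable from n under the reflexive–transitive closure of step; that is, Relation.ReflTransGen step n m holds. -/
def step (x y : ℕ) : Prop := (y = x + 1) ∨ (6 ≤ x ∧ y = x - 5)

theorem step_up (n k : ℕ) : Relation.ReflTransGen step n (n + k) := by
  induction k with
  | zero => exact .refl
  | succ k ih => exact ih.tail (Or.inl rfl)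

theorem step_down (m : ℕ) (hm : m ≥ 1) (k : ℕ) :
    Relation.ReflTransGen step (m + 5 * k) m := by
  induction k with
  | zero => exact .refl
  | succ k ih => exact .head (Or.inr ⟨by omega, by omega⟩) ih

theorem counters_reachable (n m : ℕ) (hn : n ≥ 1) (hm : m ≥ 1) :
    Relation.ReflTransGen step n m := by
  have h := step_up n (m + 4 * n)
  rw [show n + (m + 4 * n) = m + 5 * n by omega] at h
  exact h.trans (step_down m hm n)
end

section
/- Let step3 : ℕ → ℕ → Prop be the relation defined by step3 x y ↔ (y = x + 3) ∨ (6 ≤ x ∧ y = x - 5). Then for all natural numbers n and m with n ≥ 1 and m ≥ 1, m is reachable from n under the reflexive–transitive closure of step3; that is, Relation.ReflTransGen step3 n m holds. -/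
def step3 (x y : ℕ) : Prop := (y = x + 3) ∨ (6 ≤ x ∧ y = x - 5)

theorem step3_up (n : ℕ) : Relation.ReflTransGen step3 n (n + 1) :=
  ((Relation.ReflTransGen.single (b := n + 3) (Or.inl rfl)).tail
    (c := n + 6) (Or.inl rfl)).tail (Or.inr ⟨by omega, by omega⟩)

theorem step3_down (n : ℕ) (hn : 1 ≤ n) : Relation.ReflTransGen step3 (n + 1) n :=
  ((((Relation.ReflTransGen.single (b := n + 4) (Or.inl rfl)).tail
    (c := n + 7) (Or.inl rfl)).tail (c := n + 10) (Or.inl rfl)).tail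
    (c := n + 5) (Or.inr ⟨by omega, by omega⟩)).tail (Or.inr ⟨by omega, by omega⟩)

theorem counters_reachable_three (n m : ℕ) (hn : n ≥ 1) (hm : m ≥ 1) :
    Relation.ReflTransGen step3 n m := by
  have h1 : ∀ k : ℕ, 1 ≤ k → Relation.ReflTransGen step3 k 1 := by
    intro k hk
    induction k, hk using Nat.le_induction with
    | base => exact Relation.ReflTransGen.refl
    | succ k hk ih => exact (step3_down k hk).trans ih
  have h2 : ∀ k : ℕ, 1 ≤ k → Relation.ReflTransGen step3 1 k := by
    intro k hk
    induction k, hk using Nat.le_induction with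
    | base => exact Relation.ReflTransGen.refl
    | succ k hk ih => exact ih.trans (step3_up k)
  exact (h1 n hn).trans (h2 m hm)
end
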